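/- For every real ε > 0 and every positive irrational real number α, there exists a nonzero integer vector (x, y, z) ∈ ℤ³ such that |x² + y² − α z²| ≤ ε. -/

import Mathlib

section
open Matrix Filter Topology

namespace Opp

abbrev M3 := Matrix (Fin 3) (Fin 3) ℝ
abbrev Z3 := Matrix (Fin 3) (Fin 3) ℤ

/-- an integer matrix seen as a real one -/
def cst (γ : Z3) : M3 := γ.map (Int.cast : ℤ → ℝ)

/-- an integer vector seen as a real one -/
def zv (m : Fin 3 → ℤ) : Fin 3 → ℝ := fun i => (m i : ℝ)

/-- the standard form of signature (2,1) -/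
def Q (x : Fin 3 → ℝ) : ℝ := x 1 ^ 2 - 2 * x 0 * x 2

noncomputable def V1 (t : ℝ) : M3 := !![1, t, t ^ 2 / 2; 0, 1, t; 0, 0, 1]

noncomputable def V2 (s : ℝ) : M3 := !![1, 0, s; 0, 1, 0; 0, 0, 1]

/-- unimodular frames on whose lattices the form is bounded below by ε -/
def X (ε : ℝ) : Set M3 := {g | g.det = 1 ∧ ∀ m : Fin 3 → ℤ, m ≠ 0 → ε ≤ |Q (g *ᵥ zv m)|}

structure Inv (Y : Set M3) : Prop where
  closed : IsClosed Y
  v1 : ∀ t g, g ∈ Y → V1 t * g ∈ Y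
  gam : ∀ (γ : Z3) g, γ.det = 1 → g ∈ Y → g * cst γ ∈ Y

structure IsMin (ε : ℝ) (Y : Set M3) : Prop where
  inv : Inv Y
  nonempty : Y.Nonempty
  sub : Y ⊆ X ε
  min : ∀ C, Inv C → C.Nonempty → C ⊆ Y → Y ⊆ C

lemma V1_mul (s t : ℝ) : V1 s * V1 t = V1 (s + t) := by
  ext i j; fin_cases i <;> fin_cases j <;> simp [V1, Matrix.mul_apply, Fin.sum_univ_three] <;> ring

lemma V2_mul (s t : ℝ) : V2 s * V2 t = V2 (s + t) := by
  ext i j; fin_cases i <;> fin_cases j <;> simp [V2, Matrix.mul_apply, Fin.sum_univ_three] <;> ring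

lemma V1_zero : V1 0 = 1 := by
  ext i j; fin_cases i <;> fin_cases j <;> simp [V1]

lemma V2_zero : V2 0 = 1 := by
  ext i j; fin_cases i <;> fin_cases j <;> simp [V2]

lemma V1_V2 (s t : ℝ) : V1 s * V2 t = V2 t * V1 s := by
  ext i j; fin_cases i <;> fin_cases j <;>
    simp [V1, V2, Matrix.mul_apply, Fin.sum_univ_three] <;> ring

lemma det_V1 (t : ℝ) : (V1 t).det = 1 := by simp [V1, Matrix.det_fin_three]

lemma det_V2 (t : ℝ) : (V2 t).det = 1 := by simp [V2, Matrix.det_fin_three]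

lemma V1_neg (t : ℝ) : V1 t * V1 (-t) = 1 := by rw [V1_mul, add_neg_cancel, V1_zero]
lemma V1_neg' (t : ℝ) : V1 (-t) * V1 t = 1 := by rw [V1_mul, neg_add_cancel, V1_zero]
lemma V2_neg (t : ℝ) : V2 t * V2 (-t) = 1 := by rw [V2_mul, add_neg_cancel, V2_zero]
lemma V2_neg' (t : ℝ) : V2 (-t) * V2 t = 1 := by rw [V2_mul, neg_add_cancel, V2_zero]

lemma mv0 (g : M3) (x : Fin 3 → ℝ) (i : Fin 3) :
    (g *ᵥ x) i = g i 0 * x 0 + g i 1 * x 1 + g i 2 * x 2 := by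
  simp [Matrix.mulVec, dotProduct, Fin.sum_univ_three]

lemma Q_V1 (t : ℝ) (x : Fin 3 → ℝ) : Q (V1 t *ᵥ x) = Q x := by
  simp only [Q, mv0]; simp [V1]; ring

lemma Q_V2 (s : ℝ) (x : Fin 3 → ℝ) : Q (V2 s *ᵥ x) = Q x - 2 * s * x 2 ^ 2 := by
  simp only [Q, mv0]; simp [V2]; ring

lemma V1_two (t : ℝ) (x : Fin 3 → ℝ) : (V1 t *ᵥ x) 2 = x 2 := by
  simp only [mv0]; simp [V1]

lemma V2_two (t : ℝ) (x : Fin 3 → ℝ) : (V2 t *ᵥ x) 2 = x 2 := by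
  simp only [mv0]; simp [V2]

lemma cst_mul (a b : Z3) : cst (a * b) = cst a * cst b := by
  simp [cst, Matrix.map_mul_intCast]

lemma cst_one : cst 1 = 1 := by
  simp [cst]

lemma det_cst (a : Z3) : (cst a).det = (a.det : ℝ) := by
  simp [cst, Matrix.det_fin_three]

lemma zv_mul (a : Z3) (m : Fin 3 → ℤ) : zv (a *ᵥ m) = cst a *ᵥ zv m := by
  ext i
  simp [zv, cst, Matrix.mulVec, dotProduct, Fin.sum_univ_three]

lemma mul_adj {γ : Z3} (h : γ.det = 1) : γ * γ.adjugate = 1 := by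
  rw [Matrix.mul_adjugate, h, one_smul]

lemma adj_mul {γ : Z3} (h : γ.det = 1) : γ.adjugate * γ = 1 := by
  rw [Matrix.adjugate_mul, h, one_smul]

lemma det_adj {γ : Z3} (h : γ.det = 1) : γ.adjugate.det = 1 := by
  rw [Matrix.det_adjugate, h, one_pow]

lemma cst_mul_adj {γ : Z3} (h : γ.det = 1) : cst γ * cst γ.adjugate = 1 := by
  rw [← cst_mul, mul_adj h, cst_one]

lemma cst_adj_mul {γ : Z3} (h : γ.det = 1) : cst γ.adjugate * cst γ = 1 := by
  rw [← cst_mul, adj_mul h, cst_one]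

lemma gam_ne {γ : Z3} (h : γ.det = 1) {m : Fin 3 → ℤ} (hm : m ≠ 0) : γ *ᵥ m ≠ 0 := by
  intro h0
  apply hm
  have : γ.adjugate *ᵥ (γ *ᵥ m) = m := by
    rw [Matrix.mulVec_mulVec, adj_mul h, Matrix.one_mulVec]
  rw [← this, h0, Matrix.mulVec_zero]

lemma cont_Q : Continuous Q := by
  unfold Q; fun_prop

lemma cont_Qg (x : Fin 3 → ℝ) : Continuous (fun g : M3 => Q (g *ᵥ x)) := by
  apply cont_Q.comp
  fun_prop

/-- membership in X only depends on the form -/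
lemma X_of_eq {ε : ℝ} {g g' : M3} (hg : g ∈ X ε) (hd : g'.det = 1) {γ : Z3} (hγ : γ.det = 1)
    (h : ∀ m, Q (g' *ᵥ zv m) = Q (g *ᵥ zv (γ *ᵥ m))) : g' ∈ X ε :=
  ⟨hd, fun m hm => by rw [h]; exact hg.2 _ (gam_ne hγ hm)⟩

lemma X_inv (ε : ℝ) : Inv (X ε) where
  closed := by
    have : X ε = {g : M3 | g.det = 1} ∩ ⋂ m : Fin 3 → ℤ, ⋂ _ : m ≠ 0,
        {g : M3 | ε ≤ |Q (g *ᵥ zv m)|} := by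
      ext g; simp [X]
    rw [this]
    refine IsClosed.inter ?_ (isClosed_iInter fun m => isClosed_iInter fun _ => ?_)
    · exact isClosed_eq (by fun_prop) continuous_const
    · exact isClosed_le continuous_const (cont_Qg _).abs
  v1 := by
    intro t g hg
    refine X_of_eq hg (by rw [Matrix.det_mul, det_V1, hg.1, one_mul]) (γ := 1) (by simp) ?_
    intro m
    rw [← Matrix.mulVec_mulVec, Q_V1, Matrix.one_mulVec]
  gam := by
    intro γ g hγ hg
    refine X_of_eq hg (by rw [Matrix.det_mul, det_cst, hg.1, hγ]; simp) hγ ?_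
    intro m
    rw [zv_mul, Matrix.mulVec_mulVec]

lemma inv_mul {y : M3} (h : y.det = 1) : y⁻¹ * y = 1 :=
  Matrix.nonsing_inv_mul _ (by rw [h]; exact isUnit_one)

lemma mul_inv {y : M3} (h : y.det = 1) : y * y⁻¹ = 1 :=
  Matrix.mul_nonsing_inv _ (by rw [h]; exact isUnit_one)

lemma det_inv1 {y : M3} (h : y.det = 1) : (y⁻¹).det = 1 := by
  rw [Matrix.det_nonsing_inv, h]; simp

end Opp
end

section
open Matrix Filter Topology

namespace Opp

def ip (B : M3) (i j : Fin 3) : ℝ := B 0 i * B 0 j + B 1 i * B 1 j + B 2 i * B 2 j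

def D2 (B : M3) : ℝ := ip B 0 0 * ip B 1 1 - ip B 0 1 ^ 2

lemma me (B : M3) (E : Z3) (i j : Fin 3) :
    (B * cst E) i j = B i 0 * E 0 j + B i 1 * E 1 j + B i 2 * E 2 j := by
  simp [Matrix.mul_apply, Fin.sum_univ_three, cst]

lemma near_min {ι : Type*} [Nonempty ι] (f : ι → ℝ) (c : ℝ) (hc : 0 < c) (h : ∀ i, c ≤ f i) :
    ∃ i, ∀ j, f i ≤ 2 * f j := by
  have hb : BddBelow (Set.range f) := ⟨c, by rintro _ ⟨i, rfl⟩; exact h i⟩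
  have h1 : c ≤ ⨅ i, f i := le_ciInf h
  obtain ⟨i, hi⟩ := exists_lt_of_ciInf_lt (show (⨅ i, f i) < 2 * ⨅ i, f i by linarith)
  exact ⟨i, fun j => by have := ciInf_le hb j; linarith⟩

lemma round_red (u a : ℝ) (ha : 0 < a) : ∃ p : ℤ, |2 * (u + p * a)| ≤ a := by
  refine ⟨-round (u / a), ?_⟩
  have h := abs_sub_round (u / a)
  have : 2 * (u + ((-round (u / a) : ℤ) : ℝ) * a) = 2 * a * (u / a - round (u / a)) := by
    push_cast; field_simp; ring
  rw [this, abs_mul, abs_of_pos (by linarith : (0 : ℝ) < 2 * a)]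
  nlinarith

lemma gram_id (B : M3) (h : B.det = 1) :
    D2 B * (ip B 0 0 * ip B 2 2 - ip B 0 2 ^ 2) - (ip B 0 0 * ip B 1 2 - ip B 0 1 * ip B 0 2) ^ 2
      = ip B 0 0 := by
  have : D2 B * (ip B 0 0 * ip B 2 2 - ip B 0 2 ^ 2)
      - (ip B 0 0 * ip B 1 2 - ip B 0 1 * ip B 0 2) ^ 2 = ip B 0 0 * B.det ^ 2 := by
    rw [Matrix.det_fin_three]; simp only [D2, ip]; ring
  rw [this, h]; ring

lemma scal_bound (η a b e u v D D' Z : ℝ) (hη : 0 < η) (ha : η ≤ a) (hu : |2 * u| ≤ a)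
    (hv : |2 * v| ≤ a) (hZ : |2 * Z| ≤ D) (hb : a ≤ 2 * b) (hD' : D ≤ 2 * D')
    (hD : D = a * b - u ^ 2) (hE : D' = a * e - v ^ 2) (hG : D * D' - Z ^ 2 = a) :
    a ≤ 4 ∧ b ≤ 8 / η ∧ e ≤ (32 / η ^ 2 + 4) / η := by
  rw [abs_le] at hu hv hZ
  have ha0 : 0 < a := by linarith
  have hu2 : 4 * u ^ 2 ≤ a ^ 2 := by nlinarith
  have hv2 : 4 * v ^ 2 ≤ a ^ 2 := by nlinarith
  have hD0 : 0 ≤ D := by linarith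
  have hZ2 : 4 * Z ^ 2 ≤ D ^ 2 := by nlinarith
  have h1 : D ^ 2 ≤ 4 * a := by nlinarith
  have h2 : a ^ 2 ≤ 4 * D := by nlinarith
  have h3 : a ≤ 4 := by
    by_contra hlt
    push Not at hlt
    have : a ^ 4 ≤ 16 * D ^ 2 := by nlinarith [sq_nonneg a]
    have h5 : a ^ 4 ≤ 64 * a := by linarith
    have h6 : a ^ 3 ≤ 64 := by
      by_contra h7
      push Not at h7
      nlinarith
    have : 16 < a ^ 2 := by nlinarith
    nlinarith
  have h4 : D ≤ 4 := by nlinarith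
  refine ⟨h3, ?_, ?_⟩
  · rw [le_div_iff₀ hη]
    by_cases hb0 : 0 ≤ b
    · nlinarith
    · nlinarith
  · have hDη : η ^ 2 ≤ 4 * D := by nlinarith
    have hDp : 0 < D := by nlinarith [sq_pos_of_pos hη]
    have hD'0 : 0 ≤ D' := by linarith
    have h8 : D' ≤ 32 / η ^ 2 := by
      rw [le_div_iff₀ (by positivity)]
      nlinarith
    rw [le_div_iff₀ hη]
    have h9 : a * e ≤ 32 / η ^ 2 + 4 := by nlinarith
    have h10 : 0 ≤ e := by
      by_contra hlt
      push Not at hlt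
      nlinarith
    nlinarith

lemma D1_ge {ε : ℝ} {B : M3} (hB : B ∈ X ε) : ε ≤ ip B 0 0 := by
  have h := hB.2 ![1, 0, 0] (by intro h; simpa using congrFun h 0)
  refine h.trans ?_
  have : Q (B *ᵥ zv ![1, 0, 0]) = B 1 0 ^ 2 - 2 * B 0 0 * B 2 0 := by
    simp only [Q, mv0]; simp [zv]
  rw [this, abs_le]
  simp only [ip]
  constructor <;> nlinarith [sq_nonneg (B 0 0 - B 2 0), sq_nonneg (B 0 0 + B 2 0), sq_nonneg (B 1 0)]

lemma D2_ge (g : M3) (hg : g.det = 1) (γ : Z3) (hγ : γ.det = 1) :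
    1 ≤ (ip g 0 0 + ip g 1 1 + ip g 2 2) * D2 (g * cst γ) := by
  set B := g * cst γ with hB
  let c : Fin 3 → ℝ := ![B 1 0 * B 2 1 - B 2 0 * B 1 1, B 2 0 * B 0 1 - B 0 0 * B 2 1,
    B 0 0 * B 1 1 - B 1 0 * B 0 1]
  have hc : D2 B = c 0 ^ 2 + c 1 ^ 2 + c 2 ^ 2 := by
    simp [c, D2, ip]; ring
  let k : Fin 3 → ℤ := ![γ 1 0 * γ 2 1 - γ 2 0 * γ 1 1, γ 2 0 * γ 0 1 - γ 0 0 * γ 2 1,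
    γ 0 0 * γ 1 1 - γ 1 0 * γ 0 1]
  have hk : ∃ i, k i ≠ 0 := by
    by_contra h
    push Not at h
    have h0 := h 0
    have h1 := h 1
    have h2 := h 2
    simp [k] at h0 h1 h2
    rw [Matrix.det_fin_three] at hγ
    have : (0 : ℤ) = 1 := by
      rw [← hγ]; linear_combination - γ 0 2 * h0 - γ 1 2 * h1 - γ 2 2 * h2
    omega
  have hki : ∀ i, (k i : ℝ) = g 0 i * c 0 + g 1 i * c 1 + g 2 i * c 2 := by
    intro i
    have : g 0 i * c 0 + g 1 i * c 1 + g 2 i * c 2 = (k i : ℝ) * g.det := by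
      rw [Matrix.det_fin_three]
      fin_cases i <;> simp [c, k, hB, me] <;> ring
    rw [this, hg, mul_one]
  obtain ⟨i, hi⟩ := hk
  have h1 : (1 : ℝ) ≤ (k i : ℝ) ^ 2 := by
    have : (1 : ℤ) ≤ (k i) ^ 2 := by have := sq_pos_of_ne_zero hi; omega
    exact_mod_cast this
  have h2 : (k i : ℝ) ^ 2 ≤ ip g i i * D2 B := by
    rw [hki i, hc, ip]
    nlinarith [sq_nonneg (g 0 i * c 1 - g 1 i * c 0), sq_nonneg (g 0 i * c 2 - g 2 i * c 0),
      sq_nonneg (g 1 i * c 2 - g 2 i * c 1)]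
  have hpos : ∀ j, 0 ≤ ip g j j := by intro j; unfold ip; nlinarith [sq_nonneg (g 0 j), sq_nonneg (g 1 j), sq_nonneg (g 2 j)]
  have hD : 0 ≤ D2 B := by rw [hc]; positivity
  have h3 : ip g i i ≤ ip g 0 0 + ip g 1 1 + ip g 2 2 := by
    have a0 := hpos 0
    have a1 := hpos 1
    have a2 := hpos 2
    fin_cases i <;> simp <;> linarith
  nlinarith

lemma sq_le_ip (C : M3) (i j : Fin 3) : C i j ^ 2 ≤ ip C j j := by
  have h0 := mul_self_nonneg (C 0 j)
  have h1 := mul_self_nonneg (C 1 j)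
  have h2 := mul_self_nonneg (C 2 j)
  unfold ip
  rw [sq]
  fin_cases i
  · show C 0 j * C 0 j ≤ _
    linarith
  · show C 1 j * C 1 j ≤ _
    linarith
  · show C 2 j * C 2 j ≤ _
    linarith

set_option maxHeartbeats 1000000 in
lemma mahler (ε : ℝ) (hε : 0 < ε) : ∃ R : ℝ, ∀ g ∈ X ε, ∃ γ : Z3, γ.det = 1 ∧
    ∀ i j, |(g * cst γ) i j| ≤ R := by
  refine ⟨1 + 4 + 8 / ε + (32 / ε ^ 2 + 4) / ε, fun g hg => ?_⟩
  have hS := D2_ge g hg.1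
  set S := ip g 0 0 + ip g 1 1 + ip g 2 2 with hSdef
  have hSpos : 0 < S := by
    have h1 : 0 ≤ S := by
      simp only [hSdef, ip, ← sq]; positivity
    rcases h1.lt_or_eq with h | h
    · exact h
    · exfalso
      have := hS 1 (by simp)
      rw [← h] at this
      norm_num at this
  have hXγ : ∀ γ : Z3, γ.det = 1 → g * cst γ ∈ X ε := fun γ hγ => (X_inv ε).gam γ g hγ hg
  have hDlow : ∀ γ : Z3, γ.det = 1 → 1 / S ≤ D2 (g * cst γ) := fun γ hγ => by
    rw [div_le_iff₀ hSpos, mul_comm]; exact hS γ hγ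
  have : Nonempty {γ : Z3 // γ.det = 1} := ⟨⟨1, by simp⟩⟩
  obtain ⟨⟨γ, hγ⟩, hmin⟩ := near_min
    (fun γ : {γ : Z3 // γ.det = 1} => ip (g * cst γ.1) 0 0 * D2 (g * cst γ.1)) (ε * (1 / S))
    (by positivity) (fun γ => mul_le_mul (D1_ge (hXγ _ γ.2)) (hDlow _ γ.2) (by positivity)
      (hε.le.trans (D1_ge (hXγ _ γ.2))))
  set B := g * cst γ with hB
  have ha : 0 < ip B 0 0 := lt_of_lt_of_le hε (D1_ge (hXγ γ hγ))
  have hd : 0 < D2 B := lt_of_lt_of_le (by positivity) (hDlow γ hγ)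
  obtain ⟨p, hp⟩ := round_red (ip B 0 1) (ip B 0 0) ha
  obtain ⟨r, hr⟩ := round_red (ip B 0 0 * ip B 1 2 - ip B 0 1 * ip B 0 2) (D2 B) hd
  obtain ⟨q, hq⟩ := round_red (ip B 0 2 + r * ip B 0 1) (ip B 0 0) ha
  let E : Z3 := !![1, p, q; 0, 1, r; 0, 0, 1]
  have hE : E.det = 1 := by simp [E, Matrix.det_fin_three]
  let S1 : Z3 := !![0, -1, 0; 1, 0, 0; 0, 0, 1]
  have hS1 : S1.det = 1 := by simp [S1, Matrix.det_fin_three]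
  let S2 : Z3 := !![1, 0, 0; 0, 0, -1; 0, 1, 0]
  have hS2 : S2.det = 1 := by simp [S2, Matrix.det_fin_three]
  set C := B * cst E with hC
  have hCX : C ∈ X ε := (X_inv ε).gam E B hE (hXγ γ hγ)
  have hC0 : ∀ i, C i 0 = B i 0 := by intro i; rw [hC, me]; simp [E]
  have hC1 : ∀ i, C i 1 = p * B i 0 + B i 1 := by intro i; rw [hC, me]; simp [E]; ring
  have hC2 : ∀ i, C i 2 = q * B i 0 + r * B i 1 + B i 2 := by intro i; rw [hC, me]; simp [E]; ring
  have e00 : ip C 0 0 = ip B 0 0 := by simp only [ip, hC0]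
  have e01 : ip C 0 1 = ip B 0 1 + p * ip B 0 0 := by simp only [ip, hC0, hC1]; ring
  have e02 : ip C 0 2 = ip B 0 2 + r * ip B 0 1 + q * ip B 0 0 := by
    simp only [ip, hC0, hC2]; ring
  have eD : D2 C = D2 B := by simp only [D2, ip, hC0, hC1]; ring
  have eX : ip C 0 0 * ip C 1 2 - ip C 0 1 * ip C 0 2 =
      ip B 0 0 * ip B 1 2 - ip B 0 1 * ip B 0 2 + r * D2 B := by
    simp only [D2, ip, hC0, hC1, hC2]; ring
  have m1 := hmin ⟨γ * E * S1, by rw [Matrix.det_mul, Matrix.det_mul, hγ, hE, hS1]; rfl⟩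
  have m2 := hmin ⟨γ * E * S2, by rw [Matrix.det_mul, Matrix.det_mul, hγ, hE, hS2]; rfl⟩
  have hCS1 : g * cst (γ * E * S1) = C * cst S1 := by
    rw [cst_mul, cst_mul, hC, hB]; simp only [Matrix.mul_assoc]
  have hCS2 : g * cst (γ * E * S2) = C * cst S2 := by
    rw [cst_mul, cst_mul, hC, hB]; simp only [Matrix.mul_assoc]
  simp only [hCS1, hCS2] at m1 m2
  have f1 : ip (C * cst S1) 0 0 = ip C 1 1 := by
    simp only [ip, me]; simp [S1]
  have f1' : D2 (C * cst S1) = D2 B := by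
    rw [← eD]; simp only [D2, ip, me]; simp [S1]; ring
  have f2 : ip (C * cst S2) 0 0 = ip B 0 0 := by
    rw [← e00]; simp only [ip, me]; simp [S2]
  have f2' : D2 (C * cst S2) = ip C 0 0 * ip C 2 2 - ip C 0 2 ^ 2 := by
    simp only [D2, ip, me]; simp [S2]
  rw [f1, f1'] at m1
  rw [f2, f2'] at m2
  have n1 : ip B 0 0 ≤ 2 * ip C 1 1 := by
    by_contra h; push Not at h; nlinarith
  have n2 : D2 B ≤ 2 * (ip C 0 0 * ip C 2 2 - ip C 0 2 ^ 2) := by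
    by_contra h; push Not at h; nlinarith
  have key := scal_bound ε (ip C 0 0) (ip C 1 1) (ip C 2 2) (ip C 0 1) (ip C 0 2) (D2 C)
    (ip C 0 0 * ip C 2 2 - ip C 0 2 ^ 2) (ip C 0 0 * ip C 1 2 - ip C 0 1 * ip C 0 2) hε
    (D1_ge hCX) (by rw [e01, e00]; exact hp) (by rw [e02, e00]; exact hq)
    (by rw [eX, eD]; exact hr) (by rw [e00]; exact n1) (by rw [eD]; exact n2) rfl rfl
    (gram_id C hCX.1)
  refine ⟨γ * E, by rw [Matrix.det_mul, hγ, hE]; rfl, ?_⟩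
  have : g * cst (γ * E) = C := by rw [cst_mul, hC, hB, Matrix.mul_assoc]
  rw [this]
  obtain ⟨k0, k1, k2⟩ := key
  have p1 : 0 < 8 / ε := by positivity
  have p2 : 0 < (32 / ε ^ 2 + 4) / ε := by positivity
  set R1 := 8 / ε
  set R2 := (32 / ε ^ 2 + 4) / ε
  have kk : ∀ j, ip C j j ≤ 4 + R1 + R2 := by
    intro j; fin_cases j <;> simp <;> linarith
  intro i j
  have h1 := sq_le_ip C i j
  have h2 := kk j
  rw [abs_le]
  constructor <;> nlinarith

end Opp
end

section
open Matrix Filter Topology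

namespace Opp

def Kb (R : ℝ) : Set M3 := {g | ∀ i j, |g i j| ≤ R}

lemma Kb_compact (R : ℝ) : IsCompact (Kb R) := by
  have : Kb R = Set.pi Set.univ (fun _ : Fin 3 => Set.pi Set.univ
      (fun _ : Fin 3 => Set.Icc (-R) R)) := by
    ext g
    constructor
    · exact fun h i _ j _ => abs_le.1 (h i j)
    · exact fun h i j => abs_le.2 (h i trivial j trivial)
  rw [this]
  exact isCompact_univ_pi fun _ => isCompact_univ_pi fun _ => isCompact_Icc

lemma Inv.inter_Kb {ε R : ℝ} (hR : ∀ g ∈ X ε, ∃ γ : Z3, γ.det = 1 ∧ ∀ i j, |(g * cst γ) i j| ≤ R)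
    {Y : Set M3} (hY : Inv Y) (hs : Y ⊆ X ε) (hn : Y.Nonempty) : (Y ∩ Kb R).Nonempty := by
  obtain ⟨y, hy⟩ := hn
  obtain ⟨γ, hγ, h⟩ := hR y (hs hy)
  exact ⟨y * cst γ, hY.gam γ y hγ hy, h⟩

lemma exists_min {ε : ℝ} (hε : 0 < ε) {C : Set M3} (hC : Inv C) (hn : C.Nonempty)
    (hs : C ⊆ X ε) : ∃ Y ⊆ C, IsMin ε Y := by
  obtain ⟨R, hR⟩ := mahler ε hε
  obtain ⟨Y, hY⟩ := zorn_superset {Y : Set M3 | Inv Y ∧ Y.Nonempty ∧ Y ⊆ C} (by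
    intro c hc hch
    rcases c.eq_empty_or_nonempty with rfl | hne
    · exact ⟨C, ⟨hC, hn, subset_rfl⟩, by simp⟩
    refine ⟨⋂₀ c, ⟨⟨?_, ?_, ?_⟩, ?_, ?_⟩, fun s hs => Set.sInter_subset_of_mem hs⟩
    · exact isClosed_sInter fun s hs => (hc hs).1.closed
    · exact fun t g hg s hs => (hc hs).1.v1 t g (hg s hs)
    · exact fun γ g hγ hg s hs => (hc hs).1.gam γ g hγ (hg s hs)
    · have : Nonempty c := hne.to_subtype
      obtain ⟨z, hz⟩ := IsCompact.nonempty_iInter_of_directed_nonempty_isCompact_isClosed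
        (fun s : c => s.1 ∩ Kb R) (by
          intro a b
          rcases hch.total a.2 b.2 with h | h
          · exact ⟨a, subset_rfl, Set.inter_subset_inter_left _ h⟩
          · exact ⟨b, Set.inter_subset_inter_left _ h, subset_rfl⟩)
        (fun s => (hc s.2).1.inter_Kb hR ((hc s.2).2.2.trans hs) (hc s.2).2.1)
        (fun s => (Kb_compact R).inter_left (hc s.2).1.closed)
        (fun s => ((Kb_compact R).inter_left (hc s.2).1.closed).isClosed)
      refine ⟨z, fun s hs => ?_⟩
      exact (Set.mem_iInter.1 hz ⟨s, hs⟩).1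
    · obtain ⟨s, hs⟩ := hne
      exact (Set.sInter_subset_of_mem hs).trans (hc hs).2.2)
  refine ⟨Y, hY.prop.2.2, hY.prop.1, hY.prop.2.1, hY.prop.2.2.trans hs, ?_⟩
  intro D hD hDn hDY
  exact hY.le_of_le ⟨hD, hDn, hDY.trans hY.prop.2.2⟩ hDY

lemma orbit_inv (x : M3) :
    Inv (closure {g : M3 | ∃ t : ℝ, ∃ γ : Z3, γ.det = 1 ∧ g = V1 t * x * cst γ}) where
  closed := isClosed_closure
  v1 := by
    intro s g hg
    refine map_mem_closure (f := fun g => V1 s * g) (by fun_prop) hg ?_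
    rintro _ ⟨t, γ, hγ, rfl⟩
    exact ⟨s + t, γ, hγ, by rw [← V1_mul]; simp only [Matrix.mul_assoc]⟩
  gam := by
    intro η g hη hg
    refine map_mem_closure (f := fun g => g * cst η) (by fun_prop) hg ?_
    rintro _ ⟨t, γ, hγ, rfl⟩
    exact ⟨t, γ * η, by rw [Matrix.det_mul, hγ, hη, one_mul],
      by rw [cst_mul]; simp only [Matrix.mul_assoc]⟩

def tail (y : M3) (T : ℝ) : Set M3 := {g : M3 | ∃ t ≥ T, ∃ γ : Z3, γ.det = 1 ∧ g = V1 t * y * cst γ}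

lemma tail_sub {Y : Set M3} (hY : Inv Y) {y : M3} (hy : y ∈ Y) (T : ℝ) : tail y T ⊆ Y := by
  rintro _ ⟨t, -, γ, hγ, rfl⟩
  exact hY.gam γ _ hγ (hY.v1 t y hy)

lemma recur {ε : ℝ} (hε : 0 < ε) {Y : Set M3} (hY : IsMin ε Y) {y : M3} (hy : y ∈ Y) (T : ℝ) :
    y ∈ closure (tail y T) := by
  obtain ⟨R, hR⟩ := mahler ε hε
  let W : Set M3 := ⋂ T : ℝ, closure (tail y T)
  have hsub : ∀ T, closure (tail y T) ⊆ Y := fun T =>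
    closure_minimal (tail_sub hY.inv hy T) hY.inv.closed
  have hW : Inv W := by
    refine ⟨isClosed_iInter fun _ => isClosed_closure, ?_, ?_⟩
    · intro s g hg
      refine Set.mem_iInter.2 fun T => ?_
      refine map_mem_closure (f := fun g => V1 s * g) (by fun_prop) (Set.mem_iInter.1 hg (T - s)) ?_
      rintro _ ⟨t, ht, γ, hγ, rfl⟩
      exact ⟨s + t, by linarith, γ, hγ, by rw [← V1_mul]; simp only [Matrix.mul_assoc]⟩
    · intro η g hη hg
      refine Set.mem_iInter.2 fun T => ?_
      refine map_mem_closure (f := fun g => g * cst η) (by fun_prop) (Set.mem_iInter.1 hg T) ?_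
      rintro _ ⟨t, ht, γ, hγ, rfl⟩
      exact ⟨t, ht, γ * η, by rw [Matrix.det_mul, hγ, hη, one_mul],
        by rw [cst_mul]; simp only [Matrix.mul_assoc]⟩
  have hne : W.Nonempty := by
    obtain ⟨z, hz⟩ := IsCompact.nonempty_iInter_of_directed_nonempty_isCompact_isClosed
        (fun T : ℝ => closure (tail y T) ∩ Kb R) (by
          intro a b
          refine ⟨max a b, ?_, ?_⟩
          · refine Set.inter_subset_inter_left _ (closure_mono ?_)
            rintro _ ⟨t, ht, h⟩
            exact ⟨t, (le_max_left a b).trans ht, h⟩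
          · refine Set.inter_subset_inter_left _ (closure_mono ?_)
            rintro _ ⟨t, ht, h⟩
            exact ⟨t, (le_max_right a b).trans ht, h⟩)
        (fun T => by
          obtain ⟨γ, hγ, h⟩ := hR (V1 T * y) (hY.sub (hY.inv.v1 T y hy))
          exact ⟨_, subset_closure ⟨T, le_rfl, γ, hγ, rfl⟩, h⟩)
        (fun s => (Kb_compact R).inter_left isClosed_closure)
        (fun s => ((Kb_compact R).inter_left isClosed_closure).isClosed)
    exact ⟨z, Set.mem_iInter.2 fun T => (Set.mem_iInter.1 hz T).1⟩
  have := hY.min W hW hne ((Set.iInter_subset _ 0).trans (hsub 0)) hy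
  exact Set.mem_iInter.1 this T

lemma Inv.pre {C : Set M3} (hC : Inv C) (s : ℝ) : Inv {g | V2 s * g ∈ C} where
  closed := hC.closed.preimage (f := fun g : M3 => V2 s * g) (by fun_prop)
  v1 := by
    intro t g hg
    show V2 s * (V1 t * g) ∈ C
    rw [← Matrix.mul_assoc, ← V1_V2, Matrix.mul_assoc]
    exact hC.v1 _ _ hg
  gam := by
    intro γ g hγ hg
    show V2 s * (g * cst γ) ∈ C
    rw [← Matrix.mul_assoc]
    exact hC.gam _ _ hγ hg

lemma Inv.inter {C D : Set M3} (hC : Inv C) (hD : Inv D) : Inv (C ∩ D) where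
  closed := hC.closed.inter hD.closed
  v1 := fun t g hg => ⟨hC.v1 t g hg.1, hD.v1 t g hg.2⟩
  gam := fun γ g hγ hg => ⟨hC.gam γ g hγ hg.1, hD.gam γ g hγ hg.2⟩

lemma trans_sub {ε : ℝ} {Y : Set M3} (hY : IsMin ε Y) {y : M3} (hy : y ∈ Y) {s : ℝ}
    (h : V2 s * y ∈ X ε) : ∀ z ∈ Y, V2 s * z ∈ X ε := by
  have := hY.min (Y ∩ {g | V2 s * g ∈ X ε}) (hY.inv.inter ((X_inv ε).pre s)) ⟨y, hy, h⟩
    Set.inter_subset_left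
  exact fun z hz => (this hz).2

lemma V2_cancel (s : ℝ) (g : M3) : V2 (-s) * (V2 s * g) = g := by
  rw [← Matrix.mul_assoc, V2_neg', Matrix.one_mul]

lemma V2_cancel' (s : ℝ) (g : M3) : V2 s * (V2 (-s) * g) = g := by
  rw [← Matrix.mul_assoc, V2_neg, Matrix.one_mul]

lemma trans_min {ε : ℝ} {Y : Set M3} (hY : IsMin ε Y) {y : M3} (hy : y ∈ Y) {s : ℝ}
    (h : V2 s * y ∈ X ε) : IsMin ε {g | V2 (-s) * g ∈ Y} where
  inv := hY.inv.pre _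
  nonempty := ⟨V2 s * y, by show V2 (-s) * (V2 s * y) ∈ Y; rwa [V2_cancel]⟩
  sub := by
    intro z hz
    have := trans_sub hY hy h _ hz
    rwa [V2_cancel'] at this
  min := by
    intro C hC hn hs z hz
    have := hY.min {g | V2 s * g ∈ C} (hC.pre s) (by
      obtain ⟨c, hc⟩ := hn
      exact ⟨V2 (-s) * c, by show V2 s * (V2 (-s) * c) ∈ C; rwa [V2_cancel']⟩) (by
      intro g hg
      have : V2 (-s) * (V2 s * g) ∈ Y := hs hg
      rwa [V2_cancel] at this) hz
    have h2 : V2 s * (V2 (-s) * z) ∈ C := this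
    rwa [V2_cancel'] at h2

lemma int_cone (O : Set (Fin 3 → ℝ)) (hO : IsOpen O) (hn : O.Nonempty)
    (hs : ∀ w ∈ O, ∀ c : ℝ, 0 < c → c • w ∈ O) : ∃ m : Fin 3 → ℤ, zv m ∈ O := by
  have hd : DenseRange (Pi.map (fun (_ : Fin 3) (q : ℚ) => (q : ℝ))) :=
    DenseRange.piMap fun _ => Rat.denseRange_cast
  obtain ⟨q, hq⟩ := hd.exists_mem_open hO hn
  have := hs _ hq (((q 0).den : ℝ) * (q 1).den * (q 2).den) (by
    have h0 := (q 0).den_pos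
    have h1 := (q 1).den_pos
    have h2 := (q 2).den_pos
    positivity)
  refine ⟨![(q 0).num * (q 1).den * (q 2).den, (q 1).num * (q 0).den * (q 2).den,
    (q 2).num * (q 0).den * (q 1).den], ?_⟩
  convert this using 1
  have key : ∀ i, ((q i : ℚ) : ℝ) * ((q i).den : ℝ) = ((q i).num : ℝ) := fun i => by
    exact_mod_cast Rat.mul_den_eq_num (q i)
  ext i
  fin_cases i
  · simp [zv]; rw [← key 0]; ring
  · simp [zv]; rw [← key 1]; ring
  · simp [zv]; rw [← key 2]; ring

lemma cone_vec {y : M3} (hy : y.det = 1) (σ : ℝ) (u : Fin 3 → ℝ) (hu : 0 < σ * Q u)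
    (hu2 : u 2 ≠ 0) : ∃ m : Fin 3 → ℤ, 0 < σ * Q (y *ᵥ zv m) ∧ (y *ᵥ zv m) 2 ≠ 0 := by
  have hc : Continuous (fun w : Fin 3 → ℝ => y *ᵥ w) := by fun_prop
  refine int_cone {w | 0 < σ * Q (y *ᵥ w) ∧ (y *ᵥ w) 2 ≠ 0} ?_ ⟨y⁻¹ *ᵥ u, ?_⟩ ?_
  · refine IsOpen.inter ?_ ?_
    · exact isOpen_lt continuous_const (continuous_const.mul (cont_Q.comp hc))
    · exact isOpen_ne_fun ((continuous_apply 2).comp hc) continuous_const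
  · simp only [Set.mem_ofPred_eq, Matrix.mulVec_mulVec, mul_inv hy, Matrix.one_mulVec]
    exact ⟨hu, hu2⟩
  · rintro w ⟨h1, h2⟩ c hc
    simp only [Set.mem_ofPred_eq, Matrix.mulVec_smul]
    constructor
    · have : σ * Q (c • (y *ᵥ w)) = c ^ 2 * (σ * Q (y *ᵥ w)) := by simp [Q]; ring
      rw [this]; positivity
    · simp [h2, hc.ne']

end Opp
end

section
open Matrix Filter Topology

namespace Opp

lemma coef_bound (a0 a1 a2 a3 a4 M t : ℝ) (ht : 0 ≤ t)
    (h : ∀ τ, 0 ≤ τ → τ ≤ t → |a0 + a1 * τ + a2 * τ ^ 2 + a3 * τ ^ 3 + a4 * τ ^ 4| ≤ M) :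
    |a1 * t| ≤ 1000 * M ∧ |a2 * t ^ 2| ≤ 1000 * M ∧ |a3 * t ^ 3| ≤ 1000 * M ∧
      |a4 * t ^ 4| ≤ 1000 * M := by
  have e0 := h 0 le_rfl ht
  have e1 := h (t / 4) (by linarith) (by linarith)
  have e2 := h (t / 2) (by linarith) (by linarith)
  have e3 := h (3 * t / 4) (by linarith) (by linarith)
  have e4 := h t ht le_rfl
  rw [abs_le] at e0 e1 e2 e3 e4
  ring_nf at e0 e1 e2 e3 e4
  obtain ⟨b1, hb1⟩ : ∃ b, b = a1 * t := ⟨_, rfl⟩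
  obtain ⟨b2, hb2⟩ : ∃ b, b = a2 * t ^ 2 := ⟨_, rfl⟩
  obtain ⟨b3, hb3⟩ : ∃ b, b = a3 * t ^ 3 := ⟨_, rfl⟩
  obtain ⟨b4, hb4⟩ : ∃ b, b = a4 * t ^ 4 := ⟨_, rfl⟩
  have g1 : t * a1 = b1 := by rw [hb1]; ring
  have g2 : t ^ 2 * a2 = b2 := by rw [hb2]; ring
  have g3 : t ^ 3 * a3 = b3 := by rw [hb3]; ring
  have g4 : t ^ 4 * a4 = b4 := by rw [hb4]; ring
  rw [← hb1, ← hb2, ← hb3, ← hb4]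
  simp only [abs_le]
  simp only [mul_comm a1 t, mul_comm a2 (t ^ 2), mul_comm a3 (t ^ 3), mul_comm a4 (t ^ 4),
    g1, g2, g3, g4] at e0 e1 e2 e3 e4
  obtain ⟨e0l, e0u⟩ := e0
  obtain ⟨e1l, e1u⟩ := e1
  obtain ⟨e2l, e2u⟩ := e2
  obtain ⟨e3l, e3u⟩ := e3
  obtain ⟨e4l, e4u⟩ := e4
  refine ⟨⟨?_, ?_⟩, ⟨?_, ?_⟩, ⟨?_, ?_⟩, ⟨?_, ?_⟩⟩ <;> linarith

lemma unb (a C : ℝ) (k : ℕ) (hk : k ≠ 0) (h : ∀ t : ℝ, 1 ≤ t → |a * t ^ k| ≤ C) : a = 0 := by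
  by_contra ha
  have ha' : 0 < |a| := abs_pos.2 ha
  have hC : 0 ≤ C := (abs_nonneg _).trans (h 1 le_rfl)
  set t := 1 + C / |a| with ht
  have ht1 : 1 ≤ t := by have : 0 ≤ C / |a| := by positivity
                         linarith
  have h1 := h t ht1
  have h2 : t ≤ t ^ k := le_self_pow₀ ht1 hk
  rw [abs_mul, abs_of_nonneg (by positivity : 0 ≤ t ^ k)] at h1
  have h3 : |a| * t = |a| + C := by rw [ht]; field_simp
  nlinarith

lemma poly_exit (σp σm η : ℝ) (hp : 0 < σp) (hm : σm < 0) (hη : 0 < η) :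
    ∃ δ > 0, ∀ a0 a1 a2 a3 a4 : ℝ, |a0| < δ → |a1| < δ → |a2| < δ → |a3| < δ → |a4| < δ →
      ¬ (a1 = 0 ∧ a2 = 0 ∧ a3 = 0 ∧ a4 = 0) →
      ∃ t, (a0 + a1 * t + a2 * t ^ 2 + a3 * t ^ 3 + a4 * t ^ 4 = σp ∨
        a0 + a1 * t + a2 * t ^ 2 + a3 * t ^ 3 + a4 * t ^ 4 = σm) ∧
        |a1 + 2 * a2 * t + 3 * a3 * t ^ 2 + 4 * a4 * t ^ 3| ≤ η ∧
        |2 * a2 + 6 * a3 * t + 12 * a4 * t ^ 2| ≤ η ∧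
        |6 * a3 + 24 * a4 * t| ≤ η ∧ |24 * a4| ≤ η := by
  set M := max σp (-σm) with hM
  have hM0 : 0 < M := lt_of_lt_of_le hp (le_max_left _ _)
  have hMp : σp ≤ M := le_max_left _ _
  have hMm : -M ≤ σm := by have : -σm ≤ M := le_max_right _ _
                           linarith
  set μ := min σp (-σm) with hμ
  have hμ0 : 0 < μ := lt_min hp (by linarith)
  have hμp : μ ≤ σp := min_le_left _ _
  have hμm : σm ≤ -μ := by have : μ ≤ -σm := min_le_right _ _
                           linarith
  set T := 1 + 30000 * M / η with hT
  have hT1 : 1 ≤ T := by have : 0 ≤ 30000 * M / η := by positivity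
                         linarith
  have hTη : 30000 * M ≤ η * T := by
    rw [hT]; have : η * (1 + 30000 * M / η) = η + 30000 * M := by field_simp
    linarith
  have hT4 : 1 ≤ T ^ 4 := one_le_pow₀ hT1
  refine ⟨μ / (6 * T ^ 4), by positivity, ?_⟩
  intro a0 a1 a2 a3 a4 h0 h1 h2 h3 h4 hne
  set δ := μ / (6 * T ^ 4) with hδ
  have hδT : δ * T ^ 4 = μ / 6 := by rw [hδ]; field_simp
  have hδ0 : 0 < δ := by positivity
  set p : ℝ → ℝ := fun t => a0 + a1 * t + a2 * t ^ 2 + a3 * t ^ 3 + a4 * t ^ 4 with hpdef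
  have hpc : Continuous p := by fun_prop
  have hsmall : ∀ t, 0 ≤ t → t ≤ T → |p t| < μ := by
    intro t ht htT
    have mono : ∀ (a : ℝ) (k : ℕ), k ≤ 4 → |a| < δ → |a * t ^ k| ≤ μ / 6 := by
      intro a k hk ha
      rw [abs_mul, abs_of_nonneg (by positivity : 0 ≤ t ^ k), ← hδT]
      have : t ^ k ≤ T ^ 4 := (pow_le_pow_left₀ ht htT k).trans (pow_le_pow_right₀ hT1 hk)
      exact mul_le_mul ha.le this (by positivity) hδ0.le
    have k0 := mono a0 0 (by norm_num) h0
    have k1 := mono a1 1 (by norm_num) h1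
    have k2 := mono a2 2 (by norm_num) h2
    have k3 := mono a3 3 (by norm_num) h3
    have k4 := mono a4 4 (by norm_num) h4
    simp only [pow_zero, mul_one, pow_one] at k0 k1
    rw [abs_le] at k0 k1 k2 k3 k4
    rw [hpdef, abs_lt]
    constructor <;> simp only <;> linarith
  let S : Set ℝ := {t | 0 ≤ t ∧ (σp ≤ p t ∨ p t ≤ σm)}
  have hSc : IsClosed S := by
    refine IsClosed.inter (isClosed_le continuous_const continuous_id) (IsClosed.union ?_ ?_)
    · exact isClosed_le continuous_const hpc
    · exact isClosed_le hpc continuous_const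
  have hin : ∀ t, 0 ≤ t → t ∉ S → |p t| ≤ M := by
    intro t ht hn
    have : ¬ (σp ≤ p t ∨ p t ≤ σm) := fun h => hn ⟨ht, h⟩
    push Not at this
    rw [abs_le]; constructor <;> linarith [this.1, this.2]
  have hSn : S.Nonempty := by
    by_contra hS
    rw [Set.not_nonempty_iff_eq_empty] at hS
    have hall : ∀ t, 0 ≤ t → |p t| ≤ M := fun t ht => hin t ht (by rw [hS]; simp)
    have hcb : ∀ t : ℝ, 1 ≤ t → _ := fun t ht => coef_bound a0 a1 a2 a3 a4 M t (by linarith)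
      (fun τ h _ => hall τ h)
    refine hne ⟨unb a1 (1000 * M) 1 (by norm_num) fun t ht => ?_, unb a2 (1000 * M) 2 (by norm_num) fun t ht => ?_,
      unb a3 (1000 * M) 3 (by norm_num) fun t ht => ?_, unb a4 (1000 * M) 4 (by norm_num) fun t ht => ?_⟩
    · exact (by simpa using (hcb t ht).1 : |a1 * t ^ 1| ≤ 1000 * M)
    · exact (hcb t ht).2.1
    · exact (hcb t ht).2.2.1
    · exact (hcb t ht).2.2.2
  have hSb : BddBelow S := ⟨0, fun t ht => ht.1⟩
  set t := sInf S with htdef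
  have htS : t ∈ S := hSc.csInf_mem hSn hSb
  have hlt : ∀ τ, 0 ≤ τ → τ < t → τ ∉ S := fun τ _ h hτ => absurd (csInf_le hSb hτ) (not_le.2 h)
  have htT : T < t := by
    by_contra h
    push Not at h
    have := hsmall t htS.1 h
    rw [abs_lt] at this
    rcases htS.2 with h | h <;> linarith [this.1, this.2]
  have ht0 : 0 < t := by linarith
  have hcl : t ∈ closure (Set.Ico 0 t) := by
    rw [closure_Ico ht0.ne]; exact ⟨ht0.le, le_rfl⟩
  have hub : p t ≤ σp := by
    have : t ∈ {τ | p τ ≤ σp} := closure_minimal (fun τ hτ => by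
      have := hlt τ hτ.1 hτ.2
      by_contra h
      exact this ⟨hτ.1, Or.inl (not_le.1 h).le⟩) (isClosed_le hpc continuous_const) hcl
    exact this
  have hlb : σm ≤ p t := by
    have : t ∈ {τ | σm ≤ p τ} := closure_minimal (fun τ hτ => by
      have := hlt τ hτ.1 hτ.2
      by_contra h
      exact this ⟨hτ.1, Or.inr (not_le.1 h).le⟩) (isClosed_le continuous_const hpc) hcl
    exact this
  have hval : p t = σp ∨ p t = σm := by
    rcases htS.2 with h | h
    · exact Or.inl (le_antisymm hub h)
    · exact Or.inr (le_antisymm h hlb)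
  have hbd : ∀ τ, 0 ≤ τ → τ ≤ t → |p τ| ≤ M := by
    intro τ h h'
    rcases h'.lt_or_eq with h' | rfl
    · exact hin τ h (hlt τ h h')
    · rw [abs_le]; constructor <;> linarith
  obtain ⟨c1, c2, c3, c4⟩ := coef_bound a0 a1 a2 a3 a4 M t ht0.le hbd
  have fin : ∀ (E : ℝ) (k : ℕ), k ≠ 0 → |E * t ^ k| ≤ 30000 * M → |E| ≤ η := by
    intro E k hk h
    rw [abs_mul, abs_of_nonneg (by positivity : 0 ≤ t ^ k)] at h
    have h2 : T ≤ t ^ k := htT.le.trans (le_self_pow₀ (by linarith) hk)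
    by_contra hlt
    push Not at hlt
    nlinarith
  rw [abs_le] at c1 c2 c3 c4
  refine ⟨t, hval, fin _ 1 (by norm_num) ?_, fin _ 2 (by norm_num) ?_, fin _ 3 (by norm_num) ?_,
    fin _ 4 (by norm_num) ?_⟩
  · rw [show (a1 + 2 * a2 * t + 3 * a3 * t ^ 2 + 4 * a4 * t ^ 3) * t ^ 1 =
      a1 * t + 2 * (a2 * t ^ 2) + 3 * (a3 * t ^ 3) + 4 * (a4 * t ^ 4) by ring, abs_le]
    constructor <;> linarith
  · rw [show (2 * a2 + 6 * a3 * t + 12 * a4 * t ^ 2) * t ^ 2 =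
      2 * (a2 * t ^ 2) + 6 * (a3 * t ^ 3) + 12 * (a4 * t ^ 4) by ring, abs_le]
    constructor <;> linarith
  · rw [show (6 * a3 + 24 * a4 * t) * t ^ 3 =
      6 * (a3 * t ^ 3) + 24 * (a4 * t ^ 4) by ring, abs_le]
    constructor <;> linarith
  · rw [show 24 * a4 * t ^ 4 = 24 * (a4 * t ^ 4) by ring, abs_le]
    constructor <;> linarith

end Opp
end

section
open Matrix Filter Topology

namespace Opp

/-- coefficients of the pulled back form -/
def Ac (g : M3) (i j : Fin 3) : ℝ := g 1 i * g 1 j - g 0 i * g 2 j - g 2 i * g 0 j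

lemma Q_Ac (g : M3) (x : Fin 3 → ℝ) : Q (g *ᵥ x) = Ac g 0 0 * x 0 ^ 2 + Ac g 1 1 * x 1 ^ 2 +
    Ac g 2 2 * x 2 ^ 2 + 2 * Ac g 0 1 * x 0 * x 1 + 2 * Ac g 0 2 * x 0 * x 2 +
    2 * Ac g 1 2 * x 1 * x 2 := by
  simp only [Q, mv0, Ac]; ring

lemma Ac_det (g : M3) : Ac g 0 0 * Ac g 1 1 * Ac g 2 2 + 2 * Ac g 0 1 * Ac g 0 2 * Ac g 1 2
    - Ac g 0 0 * Ac g 1 2 ^ 2 - Ac g 1 1 * Ac g 0 2 ^ 2 - Ac g 2 2 * Ac g 0 1 ^ 2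
    = - g.det ^ 2 := by
  rw [Matrix.det_fin_three]; simp only [Ac]; ring

lemma Ac_cont (i j : Fin 3) : Continuous (fun g : M3 => Ac g i j) := by
  unfold Ac; fun_prop

lemma near_one (η : ℝ) (hη : 0 < η) : ∀ᶠ g in 𝓝 (1 : M3), |Ac g 0 0| < η ∧ |Ac g 0 1| < η ∧
    |Ac g 1 1 - 1| < η ∧ |Ac g 0 2 + 1| < η ∧ |Ac g 1 2| < η ∧ |Ac g 2 2| < η := by
  have h : ∀ i j c, c = Ac 1 i j → ∀ᶠ g in 𝓝 (1 : M3), |Ac g i j - c| < η := by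
    intro i j c hc
    have h1 : Tendsto (fun g : M3 => Ac g i j) (𝓝 1) (𝓝 c) := by
      rw [hc]; exact (Ac_cont i j).tendsto 1
    exact (Metric.tendsto_nhds.1 h1 η hη).mono fun g hg => by rwa [Real.dist_eq] at hg
  filter_upwards [h 0 0 0 (by simp [Ac]), h 0 1 0 (by simp [Ac]), h 1 1 1 (by simp [Ac]),
    h 0 2 (-1) (by simp [Ac]), h 1 2 0 (by simp [Ac]), h 2 2 0 (by simp [Ac])] with g
    h1 h2 h3 h4 h5 h6
  simp only [sub_zero, sub_neg_eq_add] at *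
  exact ⟨h1, h2, h3, h4, h5, h6⟩

lemma err_bound (η c0 c1 c2 c3 c4 x y z : ℝ) (h0 : |c0| ≤ η) (h1 : |c1| ≤ η)
    (h2 : |c2| ≤ η) (h3 : |c3| ≤ η) (h4 : |c4| ≤ η) :
    |c0 * y * z + c1 * x * z + c2 * y ^ 2 + c3 * x * y + c4 * x ^ 2| ≤
      η * (|x| + |y| + |z|) ^ 2 := by
  have hη : 0 ≤ η := (abs_nonneg _).trans h0
  have t : ∀ c a b : ℝ, |c| ≤ η → |c * a * b| ≤ η * (|a| * |b|) := by
    intro c a b h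
    rw [abs_mul, abs_mul, mul_assoc]
    exact mul_le_mul_of_nonneg_right h (by positivity)
  have a0 := t c0 y z h0
  have a1 := t c1 x z h1
  have a2 := t c2 y y h2
  have a3 := t c3 x y h3
  have a4 := t c4 x x h4
  have tri : |c0 * y * z + c1 * x * z + c2 * y ^ 2 + c3 * x * y + c4 * x ^ 2| ≤
      |c0 * y * z| + |c1 * x * z| + |c2 * y * y| + |c3 * x * y| + |c4 * x * x| := by
    rw [show c2 * y ^ 2 = c2 * y * y by ring, show c4 * x ^ 2 = c4 * x * x by ring]
    refine (abs_add_le _ _).trans (add_le_add_left ?_ _)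
    refine (abs_add_le _ _).trans (add_le_add_left ?_ _)
    refine (abs_add_le _ _).trans (add_le_add_left ?_ _)
    exact abs_add_le _ _
  have p1 : 0 ≤ η * (|x| * |y|) := by positivity
  have p2 : 0 ≤ η * (|x| * |z|) := by positivity
  have p3 : 0 ≤ η * (|y| * |z|) := by positivity
  have p4 : 0 ≤ η * (|z| * |z|) := by positivity
  nlinarith

lemma star_step {ε R η σp σm : ℝ} (hη : 0 < η) (hp : 0 < σp) (hm : σm < 0)
    (hR : ∀ g ∈ X ε, ∃ γ : Z3, γ.det = 1 ∧ ∀ i j, |(g * cst γ) i j| ≤ R)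
    {Y : Set M3} (hY : IsMin ε Y) :
    ∀ᶠ g in 𝓝 (1 : M3), g.det = 1 → (∃ y ∈ Y, g * y ∈ X ε) →
      (∃ s, ∀ x, Q (g *ᵥ x) = Q x + s * x 2 ^ 2) ∨
      ∃ z ∈ Y ∩ Kb R, ∃ σ, (σ = σp ∨ σ = σm) ∧ ∀ m : Fin 3 → ℤ, m ≠ 0 →
        ε ≤ |Q (z *ᵥ zv m) + σ * (z *ᵥ zv m) 2 ^ 2| +
          η * (|(z *ᵥ zv m) 0| + |(z *ᵥ zv m) 1| + |(z *ᵥ zv m) 2|) ^ 2 := by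
  obtain ⟨δ, hδ, hex⟩ := poly_exit σp σm η hp hm hη
  filter_upwards [near_one (min (δ / 2) (η / 3)) (by positivity)] with g hg hdet hy
  obtain ⟨y, hyY, hgy⟩ := hy
  have hA := Ac_det g
  rw [hdet] at hA
  have hQ := Q_Ac g
  set A00 := Ac g 0 0
  set A01 := Ac g 0 1
  set A11 := Ac g 1 1
  set A02 := Ac g 0 2
  set A12 := Ac g 1 2
  set A22 := Ac g 2 2
  simp only [lt_min_iff] at hg
  obtain ⟨⟨g1, g1'⟩, ⟨g2, g2'⟩, ⟨g3, g3'⟩, ⟨g4, g4'⟩, ⟨g5, g5'⟩, ⟨g6, g6'⟩⟩ := hg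
  rw [abs_lt] at g1 g2 g3 g4 g5 g6 g3' g4'
  by_cases hz : (2 * A12 = 0 ∧ (A11 - 1) + (A02 + 1) = 0 ∧ A01 = 0 ∧ A00 / 4 = 0)
  · left
    obtain ⟨z1, z2, z3, z4⟩ := hz
    have z1' : A12 = 0 := by linarith
    have z4' : A00 = 0 := by linarith
    have z2' : A02 = - A11 := by linarith
    rw [z1', z4', z3, z2'] at hA
    have h3 : A11 ^ 3 = 1 := by linarith
    have h11 : A11 = 1 := by
      have : (A11 - 1) * (A11 ^ 2 + A11 + 1) = 0 := by linear_combination h3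
      rcases mul_eq_zero.1 this with h | h
      · linarith
      · nlinarith [sq_nonneg (A11 + 1 / 2)]
    refine ⟨A22, fun x => ?_⟩
    rw [hQ, z1', z4', z3, z2', h11, Q]; ring
  · right
    obtain ⟨t, ht, d1, d2, d3, d4⟩ := hex A22 (2 * A12) ((A11 - 1) + (A02 + 1)) A01 (A00 / 4)
      (by rw [abs_lt]; constructor <;> linarith) (by rw [abs_lt]; constructor <;> linarith)
      (by rw [abs_lt]; constructor <;> linarith) (by rw [abs_lt]; constructor <;> linarith)
      (by rw [abs_lt]; constructor <;> linarith) hz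
    obtain ⟨γ, hγ, hK⟩ := hR (V1 (-t) * y) (hY.sub (hY.inv.v1 _ _ hyY))
    set σ := A22 + 2 * A12 * t + (A11 - 1 + (A02 + 1)) * t ^ 2 + A01 * t ^ 3 + A00 / 4 * t ^ 4
      with hσ
    refine ⟨_, ⟨hY.inv.gam γ _ hγ (hY.inv.v1 _ _ hyY), hK⟩, σ, ht, fun m hm0 => ?_⟩
    set z := V1 (-t) * y * cst γ with hzdef
    have e1 : g * y * cst γ = g * (V1 t * z) := by
      rw [hzdef, Matrix.mul_assoc (V1 (-t)), ← Matrix.mul_assoc (V1 t), V1_neg, Matrix.one_mul,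
        Matrix.mul_assoc]
    have e2 := ((X_inv ε).gam γ _ hγ hgy).2 m hm0
    rw [e1, ← Matrix.mulVec_mulVec, ← Matrix.mulVec_mulVec] at e2
    set x := z *ᵥ zv m with hx
    set c := (A11 - 1) - 2 * (A02 + 1) with hc
    set P1 := 2 * A12 + 2 * (A11 - 1 + (A02 + 1)) * t + 3 * A01 * t ^ 2 + 4 * (A00 / 4) * t ^ 3
      with hP1
    set P2 := 2 * (A11 - 1 + (A02 + 1)) + 6 * A01 * t + 12 * (A00 / 4) * t ^ 2 with hP2
    set P3 := 6 * A01 + 24 * (A00 / 4) * t with hP3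
    have e3 : Q (g *ᵥ (V1 t *ᵥ x)) = (Q x + σ * x 2 ^ 2) +
        (P1 * x 1 * x 2 + ((P2 - 2 * c) / 3) * x 0 * x 2 + ((P2 + c) / 3) * x 1 ^ 2 +
          (P3 / 3) * x 0 * x 1 + A00 * x 0 ^ 2) := by
      rw [hQ]
      have v0 : (V1 t *ᵥ x) 0 = x 0 + t * x 1 + t ^ 2 / 2 * x 2 := by rw [mv0]; simp [V1]
      have v1 : (V1 t *ᵥ x) 1 = x 1 + t * x 2 := by rw [mv0]; simp [V1]
      rw [v0, v1, V1_two, hσ, hP1, hP2, hP3, hc, Q]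
      ring
    rw [e3] at e2
    refine e2.trans ((abs_add_le _ _).trans (add_le_add_right ?_ _))
    rw [abs_le] at d2 d3 d4
    apply err_bound
    · exact d1
    · rw [abs_le]; constructor <;> linarith
    · rw [abs_le]; constructor <;> linarith
    · rw [abs_le]; constructor <;> linarith
    · rw [abs_le]; constructor <;> linarith

lemma cont_Fg (σ : ℝ) (x : Fin 3 → ℝ) :
    Continuous (fun g : M3 => |Q (g *ᵥ x) + σ * (g *ᵥ x) 2 ^ 2|) := by
  unfold Q; fun_prop

lemma star {ε : ℝ} (hε : 0 < ε) {Y : Set M3} (hY : IsMin ε Y) :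
    ∀ᶠ g in 𝓝 (1 : M3), g.det = 1 → (∃ y ∈ Y, g * y ∈ X ε) →
      ∃ s, ∀ x, Q (g *ᵥ x) = Q x + s * x 2 ^ 2 := by
  obtain ⟨R, hR⟩ := mahler ε hε
  obtain ⟨y0, hy0⟩ := hY.nonempty
  obtain ⟨mp, hmp, hmp2⟩ := cone_vec (hY.sub hy0).1 1 ![0, 1, 1] (by simp [Q]) (by simp)
  obtain ⟨mm, hmm, hmm2⟩ := cone_vec (hY.sub hy0).1 (-1) ![1, 0, 1] (by simp [Q]) (by simp)
  have sp := sq_pos_of_ne_zero hmp2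
  have sm := sq_pos_of_ne_zero hmm2
  set σp := - Q (y0 *ᵥ zv mm) / (y0 *ᵥ zv mm) 2 ^ 2 with hσp
  set σm := - Q (y0 *ᵥ zv mp) / (y0 *ᵥ zv mp) 2 ^ 2 with hσm
  have hp : 0 < σp := div_pos (by linarith) sm
  have hm : σm < 0 := div_neg_of_neg_of_pos (by linarith) sp
  by_contra hcon
  let F : ℕ → Set (M3 × ℝ) := fun n => {w | w.1 ∈ Y ∩ Kb R ∧ (w.2 = σp ∨ w.2 = σm) ∧
    ∀ m : Fin 3 → ℤ, m ≠ 0 → ε ≤ |Q (w.1 *ᵥ zv m) + w.2 * (w.1 *ᵥ zv m) 2 ^ 2| +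
      (1 / ((n : ℝ) + 1)) * (|(w.1 *ᵥ zv m) 0| + |(w.1 *ᵥ zv m) 1| + |(w.1 *ᵥ zv m) 2|) ^ 2}
  have hFne : ∀ n, (F n).Nonempty := by
    intro n
    have h1 := star_step (η := 1 / ((n : ℝ) + 1)) (by positivity) hp hm hR hY
    have h2 := (not_eventually.1 hcon).and_eventually h1
    obtain ⟨g, hg1, hg2⟩ := h2.exists
    push Not at hg1
    obtain ⟨hd, hy, hns⟩ := hg1
    rcases hg2 hd hy with ⟨s, hs⟩ | ⟨z, hz, σ, hσ, h⟩
    · obtain ⟨x, hx⟩ := hns s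
      exact absurd (hs x) hx
    · exact ⟨(z, σ), hz, hσ, h⟩
  have hFmono : ∀ n, F (n + 1) ⊆ F n := by
    rintro n w ⟨h1, h2, h3⟩
    refine ⟨h1, h2, fun m hm0 => (h3 m hm0).trans (add_le_add_right ?_ _)⟩
    refine mul_le_mul_of_nonneg_right ?_ (by positivity)
    apply one_div_le_one_div_of_le (by positivity)
    push_cast; linarith
  have hFcl : ∀ n, IsClosed (F n) := by
    intro n
    have : F n = {w | w.1 ∈ Y ∩ Kb R} ∩ ({w | w.2 = σp} ∪ {w | w.2 = σm}) ∩
        ⋂ m : Fin 3 → ℤ, ⋂ _ : m ≠ 0, {w : M3 × ℝ |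
          ε ≤ |Q (w.1 *ᵥ zv m) + w.2 * (w.1 *ᵥ zv m) 2 ^ 2| +
      (1 / ((n : ℝ) + 1)) * (|(w.1 *ᵥ zv m) 0| + |(w.1 *ᵥ zv m) 1| + |(w.1 *ᵥ zv m) 2|) ^ 2} := by
      ext w; simp [F, and_assoc]
    rw [this]
    refine IsClosed.inter (IsClosed.inter ?_ (IsClosed.union ?_ ?_))
      (isClosed_iInter fun m => isClosed_iInter fun _ => ?_)
    · exact (hY.inv.closed.inter (Kb_compact R).isClosed).preimage continuous_fst
    · exact isClosed_eq continuous_snd continuous_const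
    · exact isClosed_eq continuous_snd continuous_const
    · refine isClosed_le continuous_const ?_
      unfold Q
      fun_prop
  have hF0 : IsCompact (F 0) := by
    refine IsCompact.of_isClosed_subset ((Kb_compact R).prod (isCompact_Icc (a := σm) (b := σp)))
      (hFcl 0) ?_
    rintro w ⟨h1, h2, -⟩
    refine ⟨h1.2, ?_⟩
    rcases h2 with h | h <;> rw [h] <;> constructor <;> linarith
  obtain ⟨⟨z, σ⟩, hw⟩ := IsCompact.nonempty_iInter_of_sequence_nonempty_isCompact_isClosed F
    hFmono hFne hF0 hFcl
  rw [Set.mem_iInter] at hw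
  have hz : z ∈ Y := (hw 0).1.1
  have hσ : σ = σp ∨ σ = σm := (hw 0).2.1
  have hlim : ∀ m : Fin 3 → ℤ, m ≠ 0 → ε ≤ |Q (z *ᵥ zv m) + σ * (z *ᵥ zv m) 2 ^ 2| := by
    intro m hm0
    have h1 : Tendsto (fun n : ℕ => |Q (z *ᵥ zv m) + σ * (z *ᵥ zv m) 2 ^ 2| +
      (1 / ((n : ℝ) + 1)) * (|(z *ᵥ zv m) 0| + |(z *ᵥ zv m) 1| + |(z *ᵥ zv m) 2|) ^ 2) atTop
      (𝓝 (|Q (z *ᵥ zv m) + σ * (z *ᵥ zv m) 2 ^ 2| +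
        0 * (|(z *ᵥ zv m) 0| + |(z *ᵥ zv m) 1| + |(z *ᵥ zv m) 2|) ^ 2)) :=
      tendsto_const_nhds.add (tendsto_one_div_add_atTop_nhds_zero_nat.mul_const _)
    rw [zero_mul, add_zero] at h1
    exact ge_of_tendsto' h1 fun n => (hw n).2.2 m hm0
  let C : Set M3 := Y ∩ {g | ∀ m : Fin 3 → ℤ, m ≠ 0 →
    ε ≤ |Q (g *ᵥ zv m) + σ * (g *ᵥ zv m) 2 ^ 2|}
  have hC : Inv C := by
    refine hY.inv.inter ⟨?_, ?_, ?_⟩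
    · have : {g : M3 | ∀ m : Fin 3 → ℤ, m ≠ 0 → ε ≤ |Q (g *ᵥ zv m) + σ * (g *ᵥ zv m) 2 ^ 2|} =
          ⋂ m : Fin 3 → ℤ, ⋂ _ : m ≠ 0,
          {g : M3 | ε ≤ |Q (g *ᵥ zv m) + σ * (g *ᵥ zv m) 2 ^ 2|} := by
        ext g; simp
      rw [this]
      exact isClosed_iInter fun m => isClosed_iInter fun _ =>
        isClosed_le continuous_const (cont_Fg _ _)
    · intro t g hg m hm0
      rw [← Matrix.mulVec_mulVec, Q_V1, V1_two]
      exact hg m hm0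
    · intro γ g hγ hg m hm0
      rw [← Matrix.mulVec_mulVec, ← zv_mul]
      exact hg _ (gam_ne hγ hm0)
  have hyC := (hY.min C hC ⟨z, hz, hlim⟩ Set.inter_subset_left hy0).2
  have hzero : zv 0 = 0 := by ext i; simp [zv]
  rcases hσ with h | h
  · have hm0 : mm ≠ 0 := by
      rintro rfl
      apply hmm2; rw [hzero, Matrix.mulVec_zero]; rfl
    have := hyC mm hm0
    rw [h, hσp, div_mul_cancel₀ _ sm.ne', add_neg_cancel, abs_zero] at this
    linarith
  · have hm0 : mp ≠ 0 := by
      rintro rfl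
      apply hmp2; rw [hzero, Matrix.mulVec_zero]; rfl
    have := hyC mp hm0
    rw [h, hσm, div_mul_cancel₀ _ sp.ne', add_neg_cancel, abs_zero] at this
    linarith

end Opp
end

section
open Matrix Filter Topology

namespace Opp

lemma pert {P : M3 → Prop} (hP : ∀ᶠ g in 𝓝 (1 : M3), P g) {y : M3} (hy : y.det = 1) {S : Set M3}
    (h : y ∈ closure S) : ∃ g, P g ∧ g * y ∈ S := by
  have hc : Tendsto (fun z : M3 => z * y⁻¹) (𝓝 y) (𝓝 1) := by
    have : Continuous (fun z : M3 => z * y⁻¹) := by fun_prop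
    have h2 := this.tendsto y
    rwa [mul_inv hy] at h2
  obtain ⟨z, hz, hPz⟩ := ((mem_closure_iff_frequently.1 h).and_eventually (hc.eventually hP)).exists
  refine ⟨z * y⁻¹, hPz, ?_⟩
  rwa [Matrix.mul_assoc, inv_mul hy, Matrix.mul_one]

lemma irr_split {α : ℝ} (h : Irrational α) {p q : ℤ} (e : (p : ℝ) = α * q) : p = 0 ∧ q = 0 := by
  by_cases hq : q = 0
  · subst hq
    simp at e
    exact ⟨e, rfl⟩
  · exfalso
    apply h
    have : (q : ℝ) ≠ 0 := by exact_mod_cast hq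
    refine ⟨(p : ℚ) / q, ?_⟩
    push_cast
    rw [div_eq_iff this, e]

/-- automorphs of a diagonal form with irrational coefficient have entries of size at most one -/
lemma auto_bound {α : ℝ} (h : Irrational α) (γ : Z3)
    (hγ : ∀ m : Fin 3 → ℤ, (((γ *ᵥ m) 0 : ℤ) : ℝ) ^ 2 + (((γ *ᵥ m) 1 : ℤ) : ℝ) ^ 2 -
      α * (((γ *ᵥ m) 2 : ℤ) : ℝ) ^ 2 = (m 0 : ℝ) ^ 2 + (m 1 : ℝ) ^ 2 - α * (m 2 : ℝ) ^ 2) :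
    cst γ ∈ Kb 1 := by
  intro i j
  have h1 := hγ (Pi.single j 1)
  rw [Matrix.mulVec_single_one] at h1
  simp only [Matrix.col_apply] at h1
  set m : Fin 3 → ℤ := Pi.single j 1 with hm
  have hs := irr_split h (p := γ 0 j ^ 2 + γ 1 j ^ 2 - m 0 ^ 2 - m 1 ^ 2)
    (q := γ 2 j ^ 2 - m 2 ^ 2) (by push_cast; linarith)
  have h01 : m 0 ^ 2 + m 1 ^ 2 ≤ 1 ∧ m 2 ^ 2 ≤ 1 := by
    fin_cases j <;> simp [hm]
  have key : γ i j ^ 2 ≤ 1 := by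
    fin_cases i
    · show γ 0 j ^ 2 ≤ 1
      nlinarith [sq_nonneg (γ 1 j)]
    · show γ 1 j ^ 2 ≤ 1
      nlinarith [sq_nonneg (γ 0 j)]
    · show γ 2 j ^ 2 ≤ 1
      linarith [hs.2]
  have k2 : |γ i j| ≤ 1 := by
    rw [← sq_le_one_iff_abs_le_one]; exact key
  simp only [cst, Matrix.map_apply]
  exact_mod_cast k2

lemma exists_T {α κ : ℝ} (h : Irrational α) (hκ : 0 < κ) {y : M3} (hy : y.det = 1)
    (hQ : ∀ m, Q (y *ᵥ zv m) = κ * ((m 0 : ℝ) ^ 2 + (m 1 : ℝ) ^ 2 - α * (m 2 : ℝ) ^ 2)) :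
    ∃ T : ℝ, ∀ g ∈ Kb 2, ∀ t ≥ T, ∀ γ : Z3, γ.det = 1 → g * y = V1 t * y * cst γ →
      ¬ ∀ x, Q (g *ᵥ x) = Q x := by
  obtain ⟨B, hB⟩ := ((Kb_compact 2).prod (Kb_compact 1)).exists_bound_of_continuousOn
    (f := fun w : M3 × M3 => (w.1 * y * w.2 * y⁻¹) 0 1) (by fun_prop)
  refine ⟨B + 1, fun g hg t ht γ hγ e hx => ?_⟩
  have hm : ∀ m : Fin 3 → ℤ, Q (y *ᵥ zv (γ *ᵥ m)) = Q (y *ᵥ zv m) := by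
    intro m
    rw [← hx (y *ᵥ zv m), Matrix.mulVec_mulVec, e, ← Matrix.mulVec_mulVec, ← Matrix.mulVec_mulVec,
      Q_V1, zv_mul]
  have hadj : cst γ.adjugate ∈ Kb 1 := by
    refine auto_bound h _ fun m => ?_
    have := hm (γ.adjugate *ᵥ m)
    rw [Matrix.mulVec_mulVec, mul_adj hγ, Matrix.one_mulVec, hQ, hQ] at this
    exact (mul_left_cancel₀ hκ.ne' this).symm
  have := hB (g, cst γ.adjugate) ⟨hg, hadj⟩
  have e2 : g * y * cst γ.adjugate * y⁻¹ = V1 t := by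
    rw [e, Matrix.mul_assoc (V1 t * y), cst_mul_adj hγ, Matrix.mul_one, Matrix.mul_assoc,
      mul_inv hy, Matrix.mul_one]
  simp only [e2] at this
  have e3 : V1 t 0 1 = t := by simp [V1]
  rw [e3, Real.norm_eq_abs] at this
  linarith [le_abs_self t]

/-- a translate that pulls back the form to `Q + s x₂²` -/
lemma shift_mem {ε s : ℝ} {g y : M3} (hy : y.det = 1) (hgy : g * y ∈ X ε)
    (hs : ∀ x, Q (g *ᵥ x) = Q x + s * x 2 ^ 2) : V2 (-s / 2) * y ∈ X ε := by
  refine X_of_eq hgy (by rw [Matrix.det_mul, det_V2, hy, one_mul]) (γ := 1) (by simp) fun m => ?_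
  rw [← Matrix.mulVec_mulVec, Q_V2, Matrix.one_mulVec, ← Matrix.mulVec_mulVec, hs]
  ring

lemma cst_sub (a b : Z3) : cst (a - b) = cst a - cst b := by
  ext i j; simp [cst]

lemma Kb_nhds : ∀ᶠ g in 𝓝 (1 : M3), g ∈ Kb 2 ∧ |g 0 0 - 1| < 1 / 10 ∧ |g 2 2 - 1| < 1 / 10 ∧
    |g 0 1| < 1 := by
  have h : ∀ i j : Fin 3, ∀ c : ℝ, 0 < c → ∀ᶠ g in 𝓝 (1 : M3), |g i j - (1 : M3) i j| < c := by
    intro i j c hc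
    have h1 : Continuous (fun g : M3 => g i j) := by fun_prop
    exact (Metric.tendsto_nhds.1 (h1.tendsto 1) c hc).mono fun g hg => by
      rwa [Real.dist_eq] at hg
  have h2 : ∀ᶠ g in 𝓝 (1 : M3), ∀ i j : Fin 3, |g i j - (1 : M3) i j| < 1 / 10 := by
    rw [eventually_all]; intro i
    rw [eventually_all]; intro j
    exact h i j _ (by norm_num)
  filter_upwards [h2] with g hg
  refine ⟨fun i j => ?_, by simpa using hg 0 0, by simpa using hg 2 2, ?_⟩
  · have a := hg i j
    have b : |(1 : M3) i j| ≤ 1 := by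
      rw [Matrix.one_apply]; split_ifs <;> simp
    rw [abs_lt] at a
    rw [abs_le] at b ⊢
    constructor <;> linarith
  · have := hg 0 1
    simp at this
    linarith

lemma V1g0 (t : ℝ) (g : M3) (j : Fin 3) :
    (V1 t * g) 0 j = g 0 j + t * g 1 j + t ^ 2 / 2 * g 2 j := by
  rw [Matrix.mul_apply, Fin.sum_univ_three]; simp [V1]

lemma V1g1 (t : ℝ) (g : M3) (j : Fin 3) : (V1 t * g) 1 j = g 1 j + t * g 2 j := by
  rw [Matrix.mul_apply, Fin.sum_univ_three]; simp [V1]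

lemma V1g2 (t : ℝ) (g : M3) (j : Fin 3) : (V1 t * g) 2 j = g 2 j := by
  rw [Matrix.mul_apply, Fin.sum_univ_three]; simp [V1]

lemma gV2 (s : ℝ) (g : M3) (i : Fin 3) :
    (g * V2 s) i 0 = g i 0 ∧ (g * V2 s) i 1 = g i 1 := by
  simp only [Matrix.mul_apply, Fin.sum_univ_three]; simp [V2]

/-- the arithmetic end of the argument -/
lemma triangular_end {ε s t : ℝ} (hε : 0 < ε) {y g : M3} {γ : Z3} (hy : y ∈ X ε)
    (hdet : g.det = 1) (e : g * y = V1 t * y * cst γ)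
    (hs : ∀ x, Q (g *ᵥ x) = Q x + s * x 2 ^ 2) (h20 : g 2 0 = 0) (h21 : g 2 1 = 0)
    (h00 : |g 0 0 - 1| < 1 / 10) (h22 : |g 2 2 - 1| < 1 / 10) (h01 : |g 0 1| < 1) (ht : 2 ≤ t) :
    False := by
  have q1 := hs ![1, 0, 0]
  have q2 := hs ![0, 1, 0]
  have q3 := hs ![1, 0, 1]
  have q3' := hs ![-1, 0, 1]
  have q4 := hs ![0, 1, 1]
  have q4' := hs ![0, -1, 1]
  rw [Matrix.det_fin_three] at hdet
  simp [Q, mv0, h20, h21] at q1 q2 q3 q3' q4 q4'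
  rw [h20, h21, q1] at hdet
  rw [q1] at q3 q3'
  have p1 : g 0 0 * g 2 2 = 1 := by nlinarith
  have p2 : g 1 1 = 1 := by linear_combination hdet - g 1 1 * p1
  rw [p2] at q4 q4'
  have p3 : g 1 2 = g 0 1 * g 2 2 := by nlinarith
  -- trace
  have eU : V1 (-t) * g * y = y * cst γ := by
    rw [Matrix.mul_assoc, e, ← Matrix.mul_assoc, ← Matrix.mul_assoc, V1_neg', Matrix.one_mul]
  set U := V1 (-t) * g with hU
  have tr1 : U.trace = (cst γ).trace := by
    have : U = y * cst γ * y⁻¹ := by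
      rw [← eU, Matrix.mul_assoc, mul_inv hy.1, Matrix.mul_one]
    rw [this, Matrix.trace_mul_comm, ← Matrix.mul_assoc, inv_mul hy.1, Matrix.one_mul]
  have tr2 : (cst γ).trace = ((γ 0 0 + γ 1 1 + γ 2 2 : ℤ) : ℝ) := by
    simp [Matrix.trace, cst, Fin.sum_univ_three]
  have tr3 : U.trace = g 0 0 + 1 + g 2 2 := by
    simp [Matrix.trace, Fin.sum_univ_three, hU, V1g0, V1g1, V1g2, q1, h20, h21, p2]
  rw [tr2, tr3] at tr1
  set n := γ 0 0 + γ 1 1 + γ 2 2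
  rw [abs_lt] at h00 h22 h01
  have hn : n = 3 := by
    have l1 : (n : ℝ) < 4 := by linarith
    have l2 : (2 : ℝ) < n := by linarith
    have l1' : n < 4 := by exact_mod_cast l1
    have l2' : 2 < n := by exact_mod_cast l2
    omega
  rw [hn] at tr1
  push_cast at tr1
  have hl : g 2 2 = 1 := by
    have h0 : g 0 0 = 2 - g 2 2 := by linarith
    rw [h0] at p1
    have : (g 2 2 - 1) ^ 2 = 0 := by linear_combination -p1
    have := pow_eq_zero_iff (two_ne_zero) |>.1 this
    linarith
  have hl0 : g 0 0 = 1 := by rw [hl] at p1; linarith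
  rw [hl, mul_one] at p3
  have hUU : ∀ w : Fin 3 → ℝ, (((U - 1) * (U - 1)) *ᵥ w) 0 = (g 0 1 - t) ^ 2 * w 2 ∧
      (((U - 1) * (U - 1)) *ᵥ w) 1 = 0 ∧ (((U - 1) * (U - 1)) *ᵥ w) 2 = 0 := by
    intro w
    have u00 : (U - 1) 0 0 = 0 := by
      simp [hU, V1g0, V1g1, V1g2, q1, h20, hl0]
    have u10 : (U - 1) 1 0 = 0 := by
      simp [hU, V1g0, V1g1, V1g2, q1, h20]
    have u20 : (U - 1) 2 0 = 0 := by
      simp [hU, V1g0, V1g1, V1g2, h20]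
    have u01 : (U - 1) 0 1 = g 0 1 - t := by
      simp [hU, V1g0, V1g1, V1g2, h21, p2]; ring
    have u11 : (U - 1) 1 1 = 0 := by
      simp [hU, V1g0, V1g1, V1g2, h21, p2]
    have u21 : (U - 1) 2 1 = 0 := by
      simp [hU, V1g0, V1g1, V1g2, h21]
    have u12 : (U - 1) 1 2 = g 0 1 - t := by
      simp [hU, V1g0, V1g1, V1g2, hl, p3]; ring
    have u22 : (U - 1) 2 2 = 0 := by
      simp [hU, V1g0, V1g1, V1g2, hl]
    rw [← Matrix.mulVec_mulVec]
    simp only [mv0, u00, u10, u20, u01, u11, u21, u12, u22]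
    refine ⟨by ring, by ring, by ring⟩
  have eN : y * cst ((γ - 1) * (γ - 1)) = (U - 1) * (U - 1) * y := by
    have h1 : y * cst (γ - 1) = (U - 1) * y := by
      rw [cst_sub, cst_one, Matrix.mul_sub, Matrix.sub_mul, eU, Matrix.mul_one, Matrix.one_mul]
    rw [cst_mul, ← Matrix.mul_assoc, h1, Matrix.mul_assoc, h1, Matrix.mul_assoc]
  obtain ⟨j, hj⟩ : ∃ j, y 2 j ≠ 0 := by
    by_contra hc
    push Not at hc
    have := hy.1
    rw [Matrix.det_fin_three, hc, hc, hc] at this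
    simp at this
  have ev : y *ᵥ zv (((γ - 1) * (γ - 1)) *ᵥ Pi.single j 1) =
      ((U - 1) * (U - 1)) *ᵥ (y *ᵥ zv (Pi.single j 1)) := by
    rw [zv_mul, Matrix.mulVec_mulVec, eN, Matrix.mulVec_mulVec]
  have ej : (y *ᵥ zv (Pi.single j 1)) 2 = y 2 j := by
    rw [mv0]
    fin_cases j <;> simp [zv, Pi.single_apply]
  obtain ⟨w0, w1, w2⟩ := hUU (y *ᵥ zv (Pi.single j 1))
  rw [← ev] at w0 w1 w2
  rw [ej] at w0
  set m := ((γ - 1) * (γ - 1)) *ᵥ Pi.single j 1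
  have hm : m ≠ 0 := by
    intro h0
    rw [h0] at w0
    have hz : zv 0 = 0 := by ext i; simp [zv]
    rw [hz, Matrix.mulVec_zero] at w0
    have : (g 0 1 - t) ^ 2 * y 2 j ≠ 0 := mul_ne_zero (pow_ne_zero _ (by
      intro h; linarith)) hj
    exact this w0.symm
  have := hy.2 m hm
  simp [Q, w1, w2] at this
  linarith

lemma no_min {ε α κ : ℝ} (hε : 0 < ε) (h : Irrational α) (hκ : 0 < κ) {Y : Set M3}
    (hY : IsMin ε Y) {y : M3} (hyY : y ∈ Y)
    (hQ : ∀ m, Q (y *ᵥ zv m) = κ * ((m 0 : ℝ) ^ 2 + (m 1 : ℝ) ^ 2 - α * (m 2 : ℝ) ^ 2)) :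
    False := by
  have hyX := hY.sub hyY
  obtain ⟨T, hT⟩ := exists_T h hκ hyX.1 hQ
  have rec1 : ∀ P : M3 → Prop, (∀ᶠ g in 𝓝 (1 : M3), P g) → ∃ g t s, ∃ γ : Z3, P g ∧ 2 ≤ t ∧
      g * y ∈ Y ∧ g * y = V1 t * y * cst γ ∧ g.det = 1 ∧
      (∀ x, Q (g *ᵥ x) = Q x + s * x 2 ^ 2) ∧ s ≠ 0 ∧ |g 0 0 - 1| < 1 / 10 ∧
      |g 2 2 - 1| < 1 / 10 ∧ |g 0 1| < 1 := by
    intro P hP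
    obtain ⟨g, ⟨h1, h2, h3⟩, t, ht, γ, hγ, e⟩ := pert (hP.and ((star hε hY).and Kb_nhds)) hyX.1
      (recur hε hY hyY (max T 2))
    have hgY : g * y ∈ Y := tail_sub hY.inv hyY (max T 2) ⟨t, ht, γ, hγ, e⟩
    have hd : g.det = 1 := by
      have := (hY.sub hgY).1
      rwa [Matrix.det_mul, hyX.1, mul_one] at this
    obtain ⟨s, hs⟩ := h2 hd ⟨y, hyY, hY.sub hgY⟩
    refine ⟨g, t, s, γ, h1, (le_max_right _ _).trans ht, hgY, e, hd, hs, ?_, h3.2⟩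
    rintro rfl
    exact hT g h3.1 t ((le_max_left _ _).trans ht) γ hγ e fun x => by rw [hs]; ring
  obtain ⟨g, t, s, γ, -, ht, hgY, e, hd, hs, hs0, k1, k2, k3⟩ := rec1 (fun _ => True) (by simp)
  have hy2 : V2 (-s / 2) * y ∈ X ε := shift_mem hyX.1 (hY.sub hgY) hs
  have hY2 := trans_min hY hyY hy2
  set h' := g * V2 (s / 2) with hh
  have hdh : h'.det = 1 := by rw [hh, Matrix.det_mul, det_V2, hd, one_mul]
  have hQh : ∀ x, Q (h' *ᵥ x) = Q x := by
    intro x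
    rw [hh, ← Matrix.mulVec_mulVec, hs, Q_V2, V2_two]; ring
  have hQhi : ∀ x, Q (h'⁻¹ *ᵥ x) = Q x := by
    intro x
    rw [← hQh, Matrix.mulVec_mulVec, mul_inv hdh, Matrix.one_mulVec]
  have hgy : h' * (V2 (-s / 2) * y) = g * y := by
    rw [hh, Matrix.mul_assoc, ← Matrix.mul_assoc (V2 (s / 2)), V2_mul,
      show s / 2 + -s / 2 = 0 by ring, V2_zero, Matrix.one_mul]
  have hΦ : Tendsto (fun g' : M3 => h'⁻¹ * V2 (-Q (g' *ᵥ ![0, 0, 1]) / 2) * h') (𝓝 1) (𝓝 1) := by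
    have hV : Continuous V2 := by
      unfold V2
      refine continuous_matrix fun i j => ?_
      fin_cases i <;> fin_cases j <;> simp <;> fun_prop
    have hc : Continuous (fun g' : M3 => h'⁻¹ * V2 (-Q (g' *ᵥ ![0, 0, 1]) / 2) * h') := by
      have h1 : Continuous (fun g' : M3 => V2 (-Q (g' *ᵥ ![0, 0, 1]) / 2)) :=
        hV.comp ((cont_Qg _).neg.div_const 2)
      exact (continuous_const.mul h1).mul continuous_const
    have := hc.tendsto 1
    have e0 : -Q ((1 : M3) *ᵥ ![0, 0, 1]) / 2 = 0 := by
      rw [Matrix.one_mulVec]; simp [Q]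
    rwa [e0, V2_zero, Matrix.mul_one, inv_mul hdh] at this
  obtain ⟨g', t', s', γ', hst, -, hgY', -, -, hs', hs0', -⟩ := rec1 _
    (hΦ.eventually (star hε hY2))
  have es : Q (g' *ᵥ ![0, 0, 1]) = s' := by rw [hs']; simp [Q]
  rw [es] at hst
  have hm1 : V2 (-s' / 2) * (g * y) ∈ X ε :=
    trans_sub hY hyY (shift_mem hyX.1 (hY.sub hgY') hs') _ hgY
  have hdΦ : (h'⁻¹ * V2 (-s' / 2) * h').det = 1 := by
    rw [Matrix.det_mul, Matrix.det_mul, det_inv1 hdh, det_V2, hdh]; norm_num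
  obtain ⟨s'', hs''⟩ := hst hdΦ ⟨V2 (-s / 2) * y, by
      show V2 (-(-s / 2)) * (V2 (-s / 2) * y) ∈ Y
      rwa [V2_cancel], by
      refine X_of_eq hm1 (by rw [Matrix.det_mul, hdΦ, hy2.1, one_mul]) (γ := 1) (by simp)
        fun m => ?_
      rw [Matrix.one_mulVec, Matrix.mul_assoc (h'⁻¹ * V2 (-s' / 2)), hgy, Matrix.mul_assoc,
        ← Matrix.mulVec_mulVec, hQhi]⟩
  have hx : ∀ x, s' * (h' *ᵥ x) 2 ^ 2 = s'' * x 2 ^ 2 := by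
    intro x
    have := hs'' x
    rw [← Matrix.mulVec_mulVec, ← Matrix.mulVec_mulVec, hQhi, Q_V2, hQh] at this
    linarith
  have h20 : g 2 0 = 0 := by
    have := hx ![1, 0, 0]
    rw [mv0] at this
    simpa [hh, (gV2 (s / 2) g 2).1, (gV2 (s / 2) g 2).2, hs0'] using this
  have h21 : g 2 1 = 0 := by
    have := hx ![0, 1, 0]
    rw [mv0] at this
    simpa [hh, (gV2 (s / 2) g 2).1, (gV2 (s / 2) g 2).2, hs0'] using this
  exact triangular_end hε hyX hd e hs h20 h21 k1 k2 k3 ht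

lemma no_frame {ε α κ : ℝ} (hε : 0 < ε) (h : Irrational α) (hκ : 0 < κ) {x0 : M3}
    (hx : x0 ∈ X ε)
    (hQ : ∀ m, Q (x0 *ᵥ zv m) = κ * ((m 0 : ℝ) ^ 2 + (m 1 : ℝ) ^ 2 - α * (m 2 : ℝ) ^ 2)) :
    False := by
  have hI := orbit_inv x0
  set S := {g : M3 | ∃ t : ℝ, ∃ γ : Z3, γ.det = 1 ∧ g = V1 t * x0 * cst γ} with hS
  have hSX : S ⊆ X ε := by
    rintro _ ⟨t, γ, hγ, rfl⟩
    exact (X_inv ε).gam γ _ hγ ((X_inv ε).v1 t _ hx)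
  obtain ⟨Y, hYC, hY⟩ := exists_min hε hI
    ⟨x0, subset_closure ⟨0, 1, by simp, by rw [V1_zero, cst_one]; simp⟩⟩
    (closure_minimal hSX (X_inv ε).closed)
  obtain ⟨y, hy⟩ := hY.nonempty
  have hyX := hY.sub hy
  obtain ⟨g, hst, hgS⟩ := pert (star hε hY) hyX.1 (hYC hy)
  have hgX := hSX hgS
  have hd : g.det = 1 := by
    have := hgX.1
    rwa [Matrix.det_mul, hyX.1, mul_one] at this
  obtain ⟨s, hs⟩ := hst hd ⟨y, hy, hgX⟩
  obtain ⟨t, γ, hγ, e⟩ := hgS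
  have hy2 := shift_mem hyX.1 hgX hs
  have hY2 := trans_min hY hy hy2
  have hm : V2 (-s / 2) * y ∈ {g | V2 (-(-s / 2)) * g ∈ Y} := by
    show V2 (-(-s / 2)) * (V2 (-s / 2) * y) ∈ Y
    rwa [V2_cancel]
  refine no_min hε h hκ hY2 (hY2.inv.gam γ.adjugate _ (det_adj hγ) hm) fun m => ?_
  rw [← hQ, ← Matrix.mulVec_mulVec, ← zv_mul, ← Matrix.mulVec_mulVec, Q_V2]
  have h1 := hs (y *ᵥ zv (γ.adjugate *ᵥ m))
  rw [Matrix.mulVec_mulVec, e, ← Matrix.mulVec_mulVec, ← Matrix.mulVec_mulVec, Q_V1, ← zv_mul,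
    Matrix.mulVec_mulVec _ γ, mul_adj hγ, Matrix.one_mulVec] at h1
  rw [h1]; ring

lemma final (ε : ℝ) (hε : 0 < ε) (α : ℝ) (hα : 0 < α) (hirr : Irrational α) :
    ∃ x y z : ℤ, ¬(x = 0 ∧ y = 0 ∧ z = 0) ∧
      |(x : ℝ) ^ 2 + (y : ℝ) ^ 2 - α * (z : ℝ) ^ 2| ≤ ε := by
  by_contra hcon
  push Not at hcon
  obtain ⟨κ, hκ, hκα⟩ : ∃ κ : ℝ, 0 < κ ∧ κ ^ 3 * α = 1 := by
    refine ⟨(α⁻¹) ^ ((1 : ℝ) / 3), by positivity, ?_⟩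
    rw [← Real.rpow_natCast, ← Real.rpow_mul (by positivity)]
    norm_num
    exact inv_mul_cancel₀ hα.ne'
  set a := √(κ / 2)
  set b := √κ
  set r := √α
  have ha : a ^ 2 = κ / 2 := Real.sq_sqrt (by positivity)
  have hb : b ^ 2 = κ := Real.sq_sqrt (by positivity)
  have hr : r ^ 2 = α := Real.sq_sqrt (by positivity)
  have hb0 : 0 < b := Real.sqrt_pos.2 hκ
  have hr0 : 0 < r := Real.sqrt_pos.2 hα
  have hdet : κ * b * r = 1 := by
    have h1 : (κ * b * r) ^ 2 = 1 := by
      rw [mul_pow, mul_pow, hb, hr, ← hκα]; ring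
    have h2 : 0 < κ * b * r := by positivity
    nlinarith
  let x0 : M3 := !![a, 0, a * r; 0, b, 0; -a, 0, a * r]
  have hQ : ∀ m, Q (x0 *ᵥ zv m) =
      κ * ((m 0 : ℝ) ^ 2 + (m 1 : ℝ) ^ 2 - α * (m 2 : ℝ) ^ 2) := by
    intro m
    simp only [Q, mv0]
    simp only [x0, zv]
    simp
    rw [← hr]
    linear_combination (m 1 : ℝ) ^ 2 * hb + 2 * ((m 0 : ℝ) ^ 2 - r ^ 2 * (m 2 : ℝ) ^ 2) * ha
  refine no_frame (ε := κ * ε) (by positivity) hirr hκ (x0 := x0) ⟨?_, fun m hm => ?_⟩ hQ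
  · rw [Matrix.det_fin_three]
    simp [x0]
    linear_combination hdet + 2 * b * r * ha
  · rw [hQ, abs_mul, abs_of_pos hκ]
    refine mul_le_mul_of_nonneg_left (hcon (m 0) (m 1) (m 2) ?_).le hκ.le
    intro h0 h1 h2
    apply hm
    ext i; fin_cases i <;> assumption

end Opp
end


/-- Oppenheim conjecture for the diagonal ternary form `Q_α(x,y,z) = x² + y² − α z²`
with `α > 0` irrational. -/
theorem oppenheim_diagonal_ternary (ε : ℝ) (hε : 0 < ε) (α : ℝ) (hα : 0 < α)
    (hirr : Irrational α) :
    ∃ x y z : ℤ, ¬(x = 0 ∧ y = 0 ∧ z = 0) ∧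
      |(x : ℝ) ^ 2 + (y : ℝ) ^ 2 - α * (z : ℝ) ^ 2| ≤ ε := by
  exact Opp.final ε hε α hα hirr
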